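/- Let d ≥ 5, n ≥ 4 and a, b > 1, and let E_0, E_1 be (a,b) separated DOT clusterings of n-element configurations in Z^d. If a ≥ e^{max{100b, 10d²}}, then Pairs(E_0,E_1) = {(x,y) : (clust(E_0,x), x, y) ∈ Triples(E_0,E_1)} and Triples(E_0,E_1) = {(clust(E_0,x), x, y) : (x,y) ∈ Pairs(E_0,E_1)}, where clust(E_0,x) denotes the index of the cluster of E_0 containing x. -/

import Mathlib

open MeasureTheory

namespace HATFormal

/-- Points of the lattice `ℤ^d`. -/
abbrev Pt (d : ℕ) := Fin d → ℤ

/-- The `2d` unit steps of the simple random walk on `ℤ^d`. -/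
def Dir (d : ℕ) : Set (Pt d) :=
  {s | ∃ i : Fin d, s = Pi.single i 1 ∨ s = Pi.single i (-1)}

/-- The position, after `t` steps, of the walk started at `x` with steps `s`. -/
def wpos (d : ℕ) (x : Pt d) {T : ℕ} (s : Fin T → Pt d) (t : ℕ) : Pt d :=
  x + ∑ i ∈ Finset.univ.filter (fun i : Fin T => (i : ℕ) < t), s i

/-- The probability of an event `P` of the first `T` steps of simple random walk on `ℤ^d`. -/
noncomputable def prob (d T : ℕ) (P : (Fin T → Pt d) → Prop) : ℝ :=
  (Nat.card {s : Fin T → Pt d // (∀ i, s i ∈ Dir d) ∧ P s} : ℝ) / ((2 * d : ℕ) : ℝ) ^ T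

open Classical in
/-- `esc d A x = P_x(τ_A = ∞)` if `x ∈ A`, and `0` otherwise. -/
noncomputable def esc (d : ℕ) (A : Set (Pt d)) (x : Pt d) : ℝ :=
  if x ∈ A then ⨅ T : ℕ, prob d T (fun s => ∀ t, 1 ≤ t → t ≤ T → wpos d x s t ∉ A) else 0

/-- The capacity of `A`. -/
noncomputable def capa (d : ℕ) (A : Set (Pt d)) : ℝ := ∑' x : A, esc d A (x : Pt d)

/-- The harmonic measure `H_A(x) = esc_A(x) / cap_A`. -/
noncomputable def harm (d : ℕ) (A : Set (Pt d)) (x : Pt d) : ℝ := esc d A x / capa d A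

/-- `P_x(τ_W < ∞)`. -/
noncomputable def retProb (d : ℕ) (W : Set (Pt d)) (x : Pt d) : ℝ :=
  ∑' t : ℕ, prob d t (fun s => 1 ≤ t ∧ wpos d x s t ∈ W ∧
    ∀ u, 1 ≤ u → u < t → wpos d x s u ∉ W)

/-- `P_x(τ_W < ∞ and S_{τ_W − 1} = y)`. -/
noncomputable def hitFrom (d : ℕ) (W : Set (Pt d)) (x y : Pt d) : ℝ :=
  ∑' t : ℕ, prob d t (fun s => 1 ≤ t ∧ wpos d x s t ∈ W ∧ wpos d x s (t - 1) = y ∧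
    ∀ u, 1 ≤ u → u < t → wpos d x s u ∉ W)

/-- `P_x(τ_W < ∞ and S_{τ_W} ∈ T)`. -/
noncomputable def firstHitIn (d : ℕ) (W T : Set (Pt d)) (x : Pt d) : ℝ :=
  ∑' t : ℕ, prob d t (fun s => 1 ≤ t ∧ wpos d x s t ∈ W ∧ wpos d x s t ∈ T ∧
    ∀ u, 1 ≤ u → u < t → wpos d x s u ∉ W)

/-- `P_x(S_{τ_W − 1} = y ∣ τ_W < ∞)`. -/
noncomputable def transP (d : ℕ) (W : Set (Pt d)) (x y : Pt d) : ℝ :=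
  hitFrom d W x y / retProb d W x

/-- The Green's function of simple random walk on `ℤ^d`. -/
noncomputable def green (d : ℕ) (x : Pt d) : ℝ :=
  ∑' t : ℕ, prob d t (fun s => wpos d x s t = 0)

/-- Configurations: finite subsets of `ℤ^d`. -/
abbrev Conf (d : ℕ) := Finset (Pt d)

/-- `p_U(x, y)`, the probability that HAT activates at `x` and transports to `y`. -/
noncomputable def pHAT (d : ℕ) (U : Conf d) (x y : Pt d) : ℝ :=
  harm d (↑U) x * transP d ((↑U : Set (Pt d)) \ {x}) x y

open Classical in
/-- The transition probabilities of HAT. -/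
noncomputable def hatProb (d : ℕ) (U V : Conf d) : ℝ :=
  if V = U then ∑' z : Pt d, pHAT d U z z
  else ∑' x : Pt d, ∑' y : Pt d,
    if x ∈ U ∧ x ≠ y ∧ V = insert y (U.erase x) then pHAT d U x y else 0

instance (d : ℕ) : MeasurableSpace (Conf d) := ⊤

/-- `μ` is the law of HAT started from `U`. -/
def IsHATLaw (d : ℕ) (U : Conf d) (μ : Measure (ℕ → Conf d)) : Prop :=
  IsProbabilityMeasure μ ∧
  ∀ (t : ℕ) (u : ℕ → Conf d),
    μ {ω | ∀ s ≤ t, ω s = u s} =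
      (if u 0 = U then 1 else 0) *
        ∏ s ∈ Finset.range t, ENNReal.ofReal (hatProb d (u s) (u (s + 1)))

/-- A signed permutation plus translation of `ℤ^d`. -/
def SymImage (d : ℕ) (σ : Equiv.Perm (Fin d)) (ε : Fin d → ℤ) (v : Pt d) (x : Pt d) : Pt d :=
  fun i => v i + ε i * x (σ i)

/-- `SymEq d U V` holds when `V = gU` for a symmetry `g` of `ℤ^d`. -/
def SymEq (d : ℕ) (U V : Conf d) : Prop :=
  ∃ (σ : Equiv.Perm (Fin d)) (ε : Fin d → ℤ) (v : Pt d),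
    (∀ i, ε i = 1 ∨ ε i = -1) ∧ V = U.image (SymImage d σ ε v)

/-- Euclidean distance on `ℤ^d`. -/
noncomputable def dist0 (d : ℕ) (x y : Pt d) : ℝ :=
  Real.sqrt (∑ i, ((x i : ℝ) - (y i : ℝ)) ^ 2)

/-- Euclidean distance between finite subsets of `ℤ^d`. -/
noncomputable def setDist (d : ℕ) (A B : Finset (Pt d)) : ℝ :=
  sInf {r : ℝ | ∃ x ∈ A, ∃ y ∈ B, r = dist0 d x y}

/-- Euclidean diameter of a finite subset of `ℤ^d`. -/
noncomputable def diam0 (d : ℕ) (A : Finset (Pt d)) : ℝ :=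
  sSup {r : ℝ | ∃ x ∈ A, ∃ y ∈ A, r = dist0 d x y}

/-- Lattice (nearest-neighbor) adjacency in `ℤ^d`. -/
def latAdj (d : ℕ) (x y : Pt d) : Prop := (∑ i, (x i - y i).natAbs) = 1

/-- Exterior lattice boundary of a set. -/
def bdry (d : ℕ) (A : Set (Pt d)) : Set (Pt d) := {z | z ∉ A ∧ ∃ w ∈ A, latAdj d z w}

/-- Non-isolated configurations: some exposed element has a lattice neighbor in the set. -/
def NonIso (d : ℕ) (U : Conf d) : Prop :=
  ∃ x ∈ U, 0 < esc d (↑U) x ∧ ∃ y ∈ U, latAdj d x y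

/-- `C` is a clustering (ordered partition into nonempty clusters) of `U`. -/
def IsClusteringOf (d : ℕ) {k : ℕ} (C : Fin k → Finset (Pt d)) (U : Finset (Pt d)) : Prop :=
  (∀ i, (C i).Nonempty) ∧ (∀ i j, i ≠ j → Disjoint (C i) (C j)) ∧
    Finset.univ.biUnion C = U

/-- `C^{≠ i}`, the union of the clusters other than `i`. -/
def others (d : ℕ) {k : ℕ} (C : Fin k → Finset (Pt d)) (i : Fin k) : Finset (Pt d) :=
  Finset.univ.biUnion fun j => if j = i then ∅ else C j

/-- The separation of a clustering. -/
noncomputable def sep (d : ℕ) {k : ℕ} (C : Fin k → Finset (Pt d)) : ℝ :=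
  ⨅ i, setDist d (C i) (others d C i)

/-- `(a, b)` separated dimer-or-trimer (DOT) clusterings. -/
def IsDOT (d : ℕ) {k : ℕ} (C : Fin k → Finset (Pt d)) (a b : ℝ) : Prop :=
  (∀ i, (C i).card = 2 ∨ (C i).card = 3) ∧ a ≤ sep d C ∧
    ∀ i, diam0 d (C i) ≤ b * Real.log (setDist d (C i) (others d C i))

/-- Clusterings with an unspecified number of clusters. -/
abbrev ClusteringS (d : ℕ) := Σ k : ℕ, Fin k → Finset (Pt d)

/-- `π(C)`, the union of the clusters of `C`. -/
def confOf (d : ℕ) (C : ClusteringS d) : Conf d := Finset.univ.biUnion C.2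

/-- `C ∈ 𝒞(U, a, b)`. -/
def InC (d : ℕ) (U : Conf d) (a b : ℝ) (C : ClusteringS d) : Prop :=
  IsClusteringOf d C.2 U ∧ IsDOT d C.2 a b

/-- `U ∈ 𝒰_{d,n}(a, b)`. -/
def InU (d n : ℕ) (a b : ℝ) (U : Conf d) : Prop :=
  U.card = n ∧ ∃ C : ClusteringS d, InC d U a b C

/-- `C` is a clustering of an `n`-element configuration. -/
def IsClusteringConf (d n : ℕ) (C : ClusteringS d) : Prop :=
  (∀ i, (C.2 i).Nonempty) ∧ (∀ i j, i ≠ j → Disjoint (C.2 i) (C.2 j)) ∧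
    (confOf d C).card = n

open Classical in
/-- One step of the natural clustering. -/
noncomputable def clustStep (d : ℕ) (Ut Ut1 : Conf d) (C : ClusteringS d) : ClusteringS d :=
  if Ut1 = Ut then C
  else if h : ∃ p : Pt d × Pt d × Fin C.1,
      Ut \ Ut1 = {p.1} ∧ Ut1 \ Ut = {p.2.1} ∧ p.1 ∈ C.2 p.2.2 then
    ⟨C.1, Function.update C.2 h.choose.2.2
      (insert h.choose.2.1 ((C.2 h.choose.2.2).erase h.choose.1))⟩
  else ⟨1, fun _ => Ut1⟩

/-- The natural clustering of the trajectory `ω` with initial clustering `C0`. -/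
noncomputable def natClust (d : ℕ) (ω : ℕ → Conf d) (C0 : ClusteringS d) : ℕ → ClusteringS d
  | 0 => C0
  | t + 1 => clustStep d (ω t) (ω (t + 1)) (natClust d ω C0 t)

/-- `a_s = s^{1/2 − n^{−100}} + 100 n`. -/
noncomputable def aSep (n s : ℕ) : ℝ :=
  (s : ℝ) ^ ((1 : ℝ) / 2 - (n : ℝ) ^ (-(100 : ℝ))) + 100 * n

/-- `C^{i, x, y}`: remove `x` from cluster `i` of `C` and add `y` to that cluster. -/
def updC (d : ℕ) (C : ClusteringS d) (i : Fin C.1) (x y : Pt d) : ClusteringS d :=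
  ⟨C.1, Function.update C.2 i (insert y ((C.2 i).erase x))⟩

open Classical in
/-- The transition probabilities of the lifting of HAT to clusterings. -/
noncomputable def liftProb (d : ℕ) (E0 E1 : ClusteringS d) : ℝ :=
  ∑' x : Pt d, ∑' y : Pt d,
    if ∃ i : Fin E0.1, x ∈ E0.2 i ∧ E1 = updC d E0 i x y
    then pHAT d (confOf d E0) x y else 0

/-- The capacity of a clustering: the sum of the capacities of its clusters. -/
noncomputable def capS (d : ℕ) (C : ClusteringS d) : ℝ := ∑ i, capa d (↑(C.2 i))

/-- `H_C(i, x) = esc_{C^i}(x) / cap_C`. -/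
noncomputable def harmS (d : ℕ) (C : ClusteringS d) (i : Fin C.1) (x : Pt d) : ℝ :=
  esc d (↑(C.2 i)) x / capS d C

/-- `q_C(i, x, y)`. -/
noncomputable def qIHAT (d : ℕ) (C : ClusteringS d) (i : Fin C.1) (x y : Pt d) : ℝ :=
  harmS d C i x * transP d ((↑(C.2 i) : Set (Pt d)) \ {x}) x y

open Classical in
/-- The transition probabilities of intracluster HAT (IHAT). -/
noncomputable def ihatProb (d : ℕ) (D E : ClusteringS d) : ℝ :=
  ∑' x : Pt d, ∑' y : Pt d, ∑ i : Fin D.1,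
    if x ∈ D.2 i ∧ E = updC d D i x y then qIHAT d D i x y else 0

instance (d : ℕ) : MeasurableSpace (ClusteringS d) := ⊤

open Classical in
/-- `μ` is the law of the lifted HAT chain started from `E0`. -/
def IsLiftLaw (d : ℕ) (E0 : ClusteringS d) (μ : Measure (ℕ → ClusteringS d)) : Prop :=
  IsProbabilityMeasure μ ∧
  ∀ (t : ℕ) (u : ℕ → ClusteringS d),
    μ {ω | ∀ s ≤ t, ω s = u s} =
      (if u 0 = E0 then 1 else 0) *
        ∏ s ∈ Finset.range t, ENNReal.ofReal (liftProb d (u s) (u (s + 1)))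

open Classical in
/-- `μ` is the law of intracluster HAT started from `D0`. -/
def IsIHATLaw (d : ℕ) (D0 : ClusteringS d) (μ : Measure (ℕ → ClusteringS d)) : Prop :=
  IsProbabilityMeasure μ ∧
  ∀ (t : ℕ) (u : ℕ → ClusteringS d),
    μ {ω | ∀ s ≤ t, ω s = u s} =
      (if u 0 = D0 then 1 else 0) *
        ∏ s ∈ Finset.range t, ENNReal.ofReal (ihatProb d (u s) (u (s + 1)))

/-- `Pairs(E0, E1)`. -/
def Pairs (d : ℕ) (E0 E1 : ClusteringS d) : Set (Pt d × Pt d) :=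
  {p | 0 < pHAT d (confOf d E0) p.1 p.2 ∧
    ∃ i : Fin E0.1, p.1 ∈ E0.2 i ∧ E1 = updC d E0 i p.1 p.2}

/-- `Triples(E0, E1)`. -/
def Triples (d : ℕ) (E0 E1 : ClusteringS d) : Set (Fin E0.1 × Pt d × Pt d) :=
  {q | 0 < qIHAT d E0 q.1 q.2.1 q.2.2 ∧ E1 = updC d E0 q.1 q.2.1 q.2.2}

/-- The first standard basis vector of `ℤ^d`. -/
def e1v (d : ℕ) : Pt d := fun i => if (i : ℕ) = 0 then 1 else 0

/-- Reference dimers and trimers. -/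
def Ref (d : ℕ) : Set (Finset (Pt d)) :=
  {A | ∃ x : Pt d, A = {x, x + e1v d} ∨ A = {x, x + e1v d, x + e1v d + e1v d}}

/-- *-adjacency in `ℤ^d`: distinct points differing by at most one in each coordinate. -/
def starAdj (d : ℕ) (x y : Pt d) : Prop := x ≠ y ∧ ∀ i, (x i - y i).natAbs ≤ 1

/-- The *-visible boundary of `A`. -/
def visBdry (d : ℕ) (A : Finset (Pt d)) : Set (Pt d) :=
  {x | (∃ y ∈ A, starAdj d x y) ∧
    ∃ γ : ℕ → Pt d, γ 0 = x ∧ (∀ t, latAdj d (γ t) (γ (t + 1))) ∧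
      (∀ t, γ t ∉ A) ∧ ∀ r : ℝ, ∃ t, r < dist0 d (γ t) 0}

/-- `A` is connected in the nearest-neighbor graph of `ℤ^d`. -/
def LatConnected (d : ℕ) (A : Finset (Pt d)) : Prop :=
  ∀ x ∈ A, ∀ y ∈ A, ∃ (L : ℕ) (γ : ℕ → Pt d), γ 0 = x ∧ γ L = y ∧
    (∀ t < L, latAdj d (γ t) (γ (t + 1))) ∧ ∀ t ≤ L, γ t ∈ A

/-- Strict lexicographic order on `ℤ^d`. -/
def lexLt (d : ℕ) (x y : Pt d) : Prop :=
  ∃ i : Fin d, (∀ j, j < i → x j = y j) ∧ x i < y i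

/-- `x` is the lex (least) element of `A`. -/
def IsLex (d : ℕ) (A : Finset (Pt d)) (x : Pt d) : Prop :=
  x ∈ A ∧ ∀ y ∈ A, y ≠ x → lexLt d x y

/-!
A HAT or IHAT transition has positive probability exactly when it moves an element `x` of the
configuration to a point `y` of the exterior lattice boundary of what remains. Indeed, if from every
point some upward step `+ eᵢ` avoids a finite set `A`, then every point outside `A` is reachable
from everywhere by a path avoiding `A` (climb above `A`, where monotone paths are unobstructed), and
by transience the walk escapes from every point with positive probability. Transience for `3 ≤ d`
comes from the superharmonic function `(|x|² + 15)^(-1/2)` and the maximum principle.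

A union of clusters of fewer than `d` elements at mutual distance more than `√2` has this property,
since the `d` upward neighbours of a point are at mutual distance `√2`. So `p` and `q` can both be
tested on boundaries. If moving `x` to `y` within its cluster gives a clustering of separation more
than `1`, then `y` is neither in nor adjacent to any other cluster, and the two boundary conditions
agree.
-/

open scoped BigOperators Matrix

section OrderedFields

theorem div_pos_iff_numerator_pos {𝕜 : Type*} [Field 𝕜] [LinearOrder 𝕜] [IsStrictOrderedRing 𝕜]
    {a b : 𝕜} (ha : 0 ≤ a) (hab : 0 < a → 0 < b) : 0 < a / b ↔ 0 < a :=
  ⟨fun h => ha.lt_of_ne' (div_ne_zero_iff.mp h.ne').1, fun h => div_pos h (hab h)⟩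

theorem mul_pos_iff_of_nonneg {R : Type*} [Semiring R] [LinearOrder R] [IsStrictOrderedRing R]
    {a b : R} (ha : 0 ≤ a) (hb : 0 ≤ b) : 0 < a * b ↔ 0 < a ∧ 0 < b :=
  ⟨fun h => ⟨pos_of_mul_pos_left h hb, pos_of_mul_pos_right h ha⟩, fun h => mul_pos h.1 h.2⟩

theorem dotProduct_self_nonneg {ι R : Type*} [Fintype ι] [Ring R] [LinearOrder R]
    [IsStrictOrderedRing R] (x : ι → R) : 0 ≤ x ⬝ᵥ x :=
  Finset.sum_nonneg fun i _ => mul_self_nonneg (x i)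

-- The cubic Taylor polynomial of `(1 + t)^(-1/2)`, with a quartic term absorbing the remainder.
theorem inv_sqrt_one_add_le {t : ℝ} (ht : |t| ≤ 1 / 2) :
    (√(1 + t))⁻¹ ≤ 1 - t / 2 + 3 / 8 * t ^ 2 - 5 / 16 * t ^ 3 + t ^ 4 := by
  have hpow (n : ℕ) : |t ^ n| ≤ (1 / 2) ^ n := abs_pow t n ▸ pow_le_pow_left₀ (abs_nonneg t) ht n
  have h1 := abs_le.mp (hpow 1)
  have h2 := abs_le.mp (hpow 2)
  have h3 := abs_le.mp (hpow 3)
  have h4 : 0 ≤ t ^ 4 := by positivity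
  have h5 := abs_le.mp (hpow 5)
  norm_num only at h1 h2 h3 h5
  have hpoly : 0 < 1 - t / 2 + 3 / 8 * t ^ 2 - 5 / 16 * t ^ 3 + t ^ 4 := by linarith
  have hremainder : 0 ≤ t ^ 4 * (93 / 64 + 39 / 32 * t - 99 / 256 * t ^ 2 + 57 / 256 * t ^ 3 +
      3 / 8 * t ^ 4 + t ^ 5) :=
    mul_nonneg h4 (by linarith)
  rw [inv_le_comm₀ (Real.sqrt_pos.mpr (by linarith)) hpoly, Real.le_sqrt' (by positivity),
    inv_pow, inv_le_iff_one_le_mul₀ (by positivity)]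
  linear_combination hremainder

theorem inv_sqrt_add_add_inv_sqrt_sub_le {r u : ℝ} (hr : 16 ≤ r) (hu : u ^ 2 ≤ r) :
    (√(r + 2 * u))⁻¹ + (√(r - 2 * u))⁻¹ ≤
      (2 + (3 / r ^ 2 + 32 / r ^ 3) * u ^ 2) * (√r)⁻¹ := by
  have hr0 : 0 < r := by linarith
  have habs : |2 * u / r| ≤ 1 / 2 := by
    rw [abs_div, abs_of_pos hr0, div_le_iff₀ hr0]
    exact abs_le_of_sq_le_sq (by nlinarith) (by positivity)
  have hplus := inv_sqrt_one_add_le habs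
  have hminus := inv_sqrt_one_add_le (t := -(2 * u / r)) (by rwa [abs_neg])
  have hfactor (v : ℝ) : (√(r + v))⁻¹ = (√(1 + v / r))⁻¹ * (√r)⁻¹ := by
    rw [← mul_inv, ← Real.sqrt_mul' _ hr0.le]
    congr 2
    field_simp
  rw [sub_eq_add_neg, hfactor, hfactor, ← add_mul, neg_div]
  refine mul_le_mul_of_nonneg_right ?_ (by positivity)
  have hquartic : 2 * (2 * u / r) ^ 4 ≤ 32 / r ^ 3 * u ^ 2 := by
    calc
      2 * (2 * u / r) ^ 4 = 32 / r ^ 4 * u ^ 2 * u ^ 2 := by ring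
      _ ≤ 32 / r ^ 4 * u ^ 2 * r := by gcongr
      _ = 32 / r ^ 3 * u ^ 2 := by field_simp
  have hquadratic : 3 / 4 * (2 * u / r) ^ 2 = 3 / r ^ 2 * u ^ 2 := by ring
  linarith

theorem one_add_mul_inv_sqrt_le {r : ℝ} (hr : 1 < r) :
    (1 + 1 / (2 * r)) * (√r)⁻¹ ≤ (√(r - 1))⁻¹ := by
  have hr0 : 0 < r := by linarith
  rw [← div_eq_mul_inv, div_le_iff₀ (Real.sqrt_pos.mpr hr0), ← div_eq_inv_mul,
    ← Real.sqrt_div' _ (by linarith)]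
  refine Real.le_sqrt_of_sq_le ?_
  rw [le_div_iff₀ (by linarith)]
  have : (1 + 1 / (2 * r)) ^ 2 * (r - 1) = r - 3 / (4 * r) - 1 / (4 * r ^ 2) := by
    field_simp; ring
  have : 0 ≤ 3 / (4 * r) := by positivity
  have : 0 ≤ 1 / (4 * r ^ 2) := by positivity
  linarith

end OrderedFields

variable {d : ℕ}

/-! ### Finite walks -/

/-- An enumeration of the unit steps `± eᵢ` without repetitions, the step `ε eᵢ` being indexed by
`(i, ε)`. -/
def unitStep (p : Fin d × ℤˣ) : Pt d := Pi.single p.1 (p.2 : ℤ)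

theorem unitStep_injective : Function.Injective (unitStep (d := d)) := by
  rintro ⟨i, ε⟩ ⟨j, δ⟩ h
  have hij : i = j := by
    by_contra hij
    simpa [unitStep, hij] using congrFun h i
  subst hij
  exact Prod.ext rfl (Units.ext (Pi.single_injective i h))

theorem range_unitStep : Set.range (unitStep (d := d)) = Dir d := by
  ext v
  constructor
  · rintro ⟨⟨i, ε⟩, rfl⟩
    rcases Int.units_eq_one_or ε with rfl | rfl
    exacts [⟨i, Or.inl rfl⟩, ⟨i, Or.inr rfl⟩]
  · rintro ⟨i, rfl | rfl⟩
    exacts [⟨(i, 1), rfl⟩, ⟨(i, -1), rfl⟩]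

theorem unitStep_mem_Dir (p : Fin d × ℤˣ) : unitStep p ∈ Dir d :=
  range_unitStep ▸ Set.mem_range_self p

theorem neg_mem_Dir {v : Pt d} (hv : v ∈ Dir d) : -v ∈ Dir d := by
  obtain ⟨i, rfl | rfl⟩ := hv
  · exact ⟨i, Or.inr (Pi.single_neg i 1).symm⟩
  · exact ⟨i, Or.inl (by rw [Pi.single_neg, neg_neg])⟩

theorem latAdj_iff_sub_mem_Dir {x y : Pt d} : latAdj d x y ↔ y - x ∈ Dir d := by
  classical
  constructor
  · intro h
    obtain ⟨i, hi⟩ : ∃ i, x i - y i ≠ 0 := by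
      by_contra! hzero
      simp [latAdj, hzero] at h
    have hsum := Finset.add_sum_erase Finset.univ (fun j => (x j - y j).natAbs) (Finset.mem_univ i)
    have hpos := Int.natAbs_pos.mpr hi
    have hrest : ∑ j ∈ Finset.univ.erase i, (x j - y j).natAbs = 0 := by
      unfold latAdj at h; omega
    have hsingle : y - x = Pi.single i (y i - x i) := by
      ext j
      rcases eq_or_ne j i with rfl | hj
      · simp
      · have := Finset.sum_eq_zero_iff.mp hrest j (by simp [hj])
        simp only [Pi.sub_apply, Pi.single_eq_of_ne hj]
        omega
    have hi_one : y i - x i = 1 ∨ y i - x i = -1 := by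
      unfold latAdj at h; omega
    rw [hsingle]
    exact ⟨i, hi_one.imp (congrArg _) (congrArg _)⟩
  · rintro ⟨i, h | h⟩ <;> rw [sub_eq_iff_eq_add'] at h <;> subst h <;>
      simp [latAdj, Pi.single_apply, apply_ite]

open Classical in
theorem prob_eq_expect (T : ℕ) (P : (Fin T → Pt d) → Prop) :
    prob d T P = 𝔼 ω : Fin T → Fin d × ℤˣ, if P (unitStep ∘ ω) then 1 else 0 := by
  have hbij : Nat.card {s : Fin T → Pt d // (∀ i, s i ∈ Dir d) ∧ P s} =
      Nat.card {ω : Fin T → Fin d × ℤˣ // P (unitStep ∘ ω)} := by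
    refine (Nat.card_congr (Equiv.ofBijective
      (fun ω => ⟨unitStep ∘ ω.1, fun i => unitStep_mem_Dir _, ω.2⟩) ⟨fun ω ω' h => ?_, ?_⟩)).symm
    · exact Subtype.ext (unitStep_injective.comp_left (congrArg Subtype.val h))
    · rintro ⟨s, hs, hP⟩
      obtain ⟨ω, rfl⟩ : ∃ ω, unitStep ∘ ω = s := by
        choose ω hω using fun i => range_unitStep.symm ▸ hs i
        exact ⟨ω, funext hω⟩
      exact ⟨⟨ω, hP⟩, rfl⟩
  rw [prob, hbij, Fintype.expect_eq_sum_div_card, Finset.sum_boole, Nat.card_eq_fintype_card,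
    Fintype.card_subtype]
  simp [mul_comm]

theorem prob_nonneg (T : ℕ) (P : (Fin T → Pt d) → Prop) : 0 ≤ prob d T P := by
  unfold prob; positivity

theorem prob_congr {T : ℕ} {P Q : (Fin T → Pt d) → Prop} (h : ∀ s, P s ↔ Q s) :
    prob d T P = prob d T Q :=
  congrArg (prob d T) (funext fun s => propext (h s))

theorem prob_mono {T : ℕ} {P Q : (Fin T → Pt d) → Prop} (h : ∀ s, P s → Q s) :
    prob d T P ≤ prob d T Q := by
  classical
  simp only [prob_eq_expect]
  gcongr with ω
  split_ifs <;> simp_all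

theorem prob_and_add_prob_and_not (T : ℕ) (P Q : (Fin T → Pt d) → Prop) :
    prob d T (fun s => P s ∧ Q s) + prob d T (fun s => P s ∧ ¬ Q s) = prob d T P := by
  classical
  simp only [prob_eq_expect, ← Finset.expect_add_distrib]
  refine Finset.expect_congr rfl fun ω _ => ?_
  by_cases hP : P (unitStep ∘ ω) <;> by_cases hQ : Q (unitStep ∘ ω) <;> simp [hP, hQ]

theorem prob_pos_iff {T : ℕ} {P : (Fin T → Pt d) → Prop} :
    0 < prob d T P ↔ ∃ s, (∀ i, s i ∈ Dir d) ∧ P s := by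
  classical
  rw [prob_eq_expect]
  constructor
  · intro h
    obtain ⟨ω, -, hω⟩ := Finset.exists_ne_zero_of_expect_ne_zero h.ne'
    exact ⟨unitStep ∘ ω, fun i => unitStep_mem_Dir _, by simpa using hω⟩
  · rintro ⟨s, hs, hP⟩
    choose ω hω using fun i => range_unitStep.symm ▸ hs i
    obtain rfl : unitStep ∘ ω = s := funext hω
    exact Finset.expect_pos' (fun _ _ => by positivity) ⟨ω, Finset.mem_univ _, by simp [hP]⟩

theorem prob_succ (T : ℕ) (P : (Fin (T + 1) → Pt d) → Prop) :
    prob d (T + 1) P = 𝔼 p, prob d T (fun s => P (Fin.cons (unitStep p) s)) := by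
  classical
  simp only [prob_eq_expect]
  rw [← Finset.expect_product', Finset.univ_product_univ]
  refine (Fintype.expect_equiv (Fin.consEquiv fun _ => Fin d × ℤˣ) _ _ fun q => ?_).symm
  simp [Fin.consEquiv, Fin.comp_cons]

theorem prob_init [NeZero d] (T : ℕ) (P : (Fin T → Pt d) → Prop) :
    prob d (T + 1) (fun s => P (Fin.init s)) = prob d T P := by
  classical
  simp only [prob_eq_expect]
  calc
    _ = 𝔼 q : (Fin d × ℤˣ) × (Fin T → Fin d × ℤˣ),
          if P (unitStep ∘ q.2) then (1 : ℝ) else 0 :=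
        (Fintype.expect_equiv (Fin.snocEquiv fun _ => Fin d × ℤˣ) _ _ fun q => by
          simp [Fin.snocEquiv, Fin.comp_snoc]).symm
    _ = 𝔼 _p : Fin d × ℤˣ, 𝔼 ω : Fin T → Fin d × ℤˣ,
          if P (unitStep ∘ ω) then (1 : ℝ) else 0 := by
        rw [← Finset.expect_product', Finset.univ_product_univ]
    _ = _ := Fintype.expect_const _

theorem wpos_zero (x : Pt d) {T : ℕ} (s : Fin T → Pt d) : wpos d x s 0 = x := by
  simp [wpos]

theorem wpos_cons (x v : Pt d) {T : ℕ} (s : Fin T → Pt d) (t : ℕ) :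
    wpos d x (Fin.cons v s : Fin (T + 1) → Pt d) (t + 1) = wpos d (x + v) s t := by
  simp [wpos, Finset.sum_filter, Fin.sum_univ_succ, add_assoc]

theorem wpos_init (x : Pt d) {T t : ℕ} (s : Fin (T + 1) → Pt d) (ht : t ≤ T) :
    wpos d x (Fin.init s) t = wpos d x s t := by
  simp [wpos, Finset.sum_filter, Fin.sum_univ_castSucc, ht.not_gt, Fin.init]

theorem wpos_succ_last (x : Pt d) {T : ℕ} (s : Fin (T + 1) → Pt d) :
    wpos d x s (T + 1) = wpos d x s T + s (Fin.last T) := by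
  simp [wpos, Finset.sum_filter, Fin.sum_univ_castSucc, add_assoc]

/-! ### Escape and hitting probabilities -/

/-- The probability that the walk from `x` does not visit `A` at any of the times `1, …, T`. -/
noncomputable def avoidProb (A : Set (Pt d)) (T : ℕ) (x : Pt d) : ℝ :=
  prob d T fun s => ∀ t, 1 ≤ t → t ≤ T → wpos d x s t ∉ A

/-- The probability that the walk from `x` first visits `W`, after time `0`, at time `t`. -/
noncomputable def firstHitProb (W : Set (Pt d)) (x : Pt d) (t : ℕ) : ℝ :=
  prob d t fun s => 1 ≤ t ∧ wpos d x s t ∈ W ∧ ∀ u, 1 ≤ u → u < t → wpos d x s u ∉ W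

/-- The probability that the walk from `x` first visits `W`, after time `0`, at time `t`, and does
so by a step from `y`: the general term of the series `hitFrom d W x y`. -/
noncomputable def firstHitFromProb (W : Set (Pt d)) (x y : Pt d) (t : ℕ) : ℝ :=
  prob d t fun s => 1 ≤ t ∧ wpos d x s t ∈ W ∧ wpos d x s (t - 1) = y ∧
    ∀ u, 1 ≤ u → u < t → wpos d x s u ∉ W

/-- The probability that the walk from `x`, which need not lie in `A`, never visits `A` after
time `0`. -/
noncomputable def escapeProb (A : Set (Pt d)) (x : Pt d) : ℝ := ⨅ T, avoidProb A T x

section Escape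

variable {A W : Set (Pt d)} {x y : Pt d}

theorem avoidProb_zero (A : Set (Pt d)) (x : Pt d) : avoidProb A 0 x = 1 := by
  simp [avoidProb, prob_eq_expect]

theorem avoidProb_succ (A : Set (Pt d)) (T : ℕ) (x : Pt d) :
    avoidProb A (T + 1) x = 𝔼 p, Aᶜ.indicator (avoidProb A T) (x + unitStep p) := by
  rw [avoidProb, prob_succ]
  refine Finset.expect_congr rfl fun p _ => ?_
  by_cases hp : x + unitStep p ∈ A
  · rw [Set.indicator_of_notMem (not_not.mpr hp)]
    refine le_antisymm (not_lt.mp fun hpos => ?_) (prob_nonneg _ _)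
    obtain ⟨s, -, hs⟩ := prob_pos_iff.mp hpos
    exact hs 1 le_rfl (by omega) (by rwa [wpos_cons, wpos_zero])
  · rw [Set.indicator_of_mem (Set.mem_compl hp), avoidProb]
    refine prob_congr fun s => ?_
    constructor
    · intro h t ht htT
      simpa only [wpos_cons] using h (t + 1) (by omega) (by omega)
    · rintro h (_ | _ | t) ht htT
      · omega
      · rwa [wpos_cons, wpos_zero]
      · simpa only [wpos_cons] using h (t + 1) (by omega) (by omega)

theorem firstHitProb_succ_add_avoidProb_succ [NeZero d] (W : Set (Pt d)) (x : Pt d) (t : ℕ) :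
    firstHitProb W x (t + 1) + avoidProb W (t + 1) x = avoidProb W t x := by
  have hinit : avoidProb W t x =
      prob d (t + 1) fun s => ∀ u, 1 ≤ u → u < t + 1 → wpos d x s u ∉ W := by
    rw [avoidProb, ← prob_init t]
    refine prob_congr fun s => forall₂_congr fun u _ => ?_
    rw [Nat.lt_succ_iff]
    exact forall_congr' fun hut => by rw [wpos_init x s hut]
  rw [hinit]
  refine Eq.trans ?_ (prob_and_add_prob_and_not _ _ fun s => wpos d x s (t + 1) ∈ W)
  refine congrArg₂ (· + ·) (prob_congr fun s => ?_) (prob_congr fun s => ?_)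
  · exact ⟨fun h => ⟨h.2.2, h.2.1⟩, fun h => ⟨by omega, h.2, h.1⟩⟩
  · refine ⟨fun h => ⟨fun u hu hut => h u hu hut.le, h _ (by omega) le_rfl⟩, ?_⟩
    rintro ⟨h, hlast⟩ u hu hut
    rcases hut.eq_or_lt with rfl | hut
    exacts [hlast, h u hu hut]

theorem firstHitProb_nonneg (W : Set (Pt d)) (x : Pt d) (t : ℕ) : 0 ≤ firstHitProb W x t :=
  prob_nonneg _ _

theorem avoidProb_nonneg (A : Set (Pt d)) (T : ℕ) (x : Pt d) : 0 ≤ avoidProb A T x :=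
  prob_nonneg _ _

theorem avoidProb_succ_le [NeZero d] (A : Set (Pt d)) (T : ℕ) (x : Pt d) :
    avoidProb A (T + 1) x ≤ avoidProb A T x := by
  linarith [firstHitProb_succ_add_avoidProb_succ A x T, firstHitProb_nonneg A x (T + 1)]

theorem summable_firstHitProb [NeZero d] (W : Set (Pt d)) (x : Pt d) :
    Summable (firstHitProb W x) := by
  rw [← summable_nat_add_iff 1]
  refine summable_of_sum_range_le (c := 1) (fun t => firstHitProb_nonneg W x _) fun N => ?_
  have htelescope : ∑ t ∈ Finset.range N, firstHitProb W x (t + 1) + avoidProb W N x = 1 := by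
    induction N with
    | zero => simp [avoidProb_zero]
    | succ N ih =>
      rw [Finset.sum_range_succ, add_assoc, firstHitProb_succ_add_avoidProb_succ, ih]
  linarith [avoidProb_nonneg W N x]

theorem escapeProb_nonneg (A : Set (Pt d)) (x : Pt d) : 0 ≤ escapeProb A x :=
  Real.iInf_nonneg fun T => avoidProb_nonneg A T x

theorem escapeProb_le_avoidProb (A : Set (Pt d)) (T : ℕ) (x : Pt d) :
    escapeProb A x ≤ avoidProb A T x :=
  ciInf_le ⟨0, Set.forall_mem_range.mpr fun T => avoidProb_nonneg A T x⟩ T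

theorem expect_indicator_escapeProb_le [NeZero d] (A : Set (Pt d)) (x : Pt d) :
    𝔼 p, Aᶜ.indicator (escapeProb A) (x + unitStep p) ≤ escapeProb A x := by
  refine le_ciInf fun T => ?_
  calc
    _ ≤ 𝔼 p, Aᶜ.indicator (avoidProb A T) (x + unitStep p) := by
      gcongr with p
      exact escapeProb_le_avoidProb A T _
    _ = avoidProb A (T + 1) x := (avoidProb_succ A T x).symm
    _ ≤ avoidProb A T x := avoidProb_succ_le A T x

theorem one_sub_le_avoidProb_of_superharmonic [NeZero d] {f : Pt d → ℝ} (hf : ∀ z, 0 ≤ f z)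
    (hsuper : ∀ z, 𝔼 p, f (z + unitStep p) ≤ f z) (hA : ∀ z ∈ A, 1 ≤ f z) (T : ℕ) (x : Pt d) :
    1 - f x ≤ avoidProb A T x := by
  induction T generalizing x with
  | zero => linarith [avoidProb_zero A x, hf x]
  | succ T ih =>
    calc
      1 - f x ≤ 1 - 𝔼 p, f (x + unitStep p) := by linarith [hsuper x]
      _ = 𝔼 p, (1 - f (x + unitStep p)) := by
        rw [Finset.expect_sub_distrib, Fintype.expect_const]
      _ ≤ 𝔼 p, Aᶜ.indicator (avoidProb A T) (x + unitStep p) := by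
        gcongr with p
        by_cases hp : x + unitStep p ∈ A
        · simpa [hp] using hA _ hp
        · simpa [hp] using ih _
      _ = avoidProb A (T + 1) x := (avoidProb_succ A T x).symm

theorem escapeProb_pos_of_superharmonic [NeZero d] {f : Pt d → ℝ} (hf : ∀ z, 0 ≤ f z)
    (hsuper : ∀ z, 𝔼 p, f (z + unitStep p) ≤ f z) (hA : ∀ z ∈ A, 1 ≤ f z) (hx : f x < 1) :
    0 < escapeProb A x :=
  (sub_pos.mpr hx).trans_le <| le_ciInf fun T =>
    one_sub_le_avoidProb_of_superharmonic hf hsuper hA T x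

end Escape

/-! ### Reachability in the complement of a finite set -/

/-- `y` can be reached from `x` by a nearest-neighbour path which does not visit `W` after its
starting point. -/
def ReachableOutside (W : Set (Pt d)) : Pt d → Pt d → Prop :=
  Relation.ReflTransGen fun z w => w ∉ W ∧ w - z ∈ Dir d

/-- From every point there is an upward unit step leading outside of `A`, so that the walk can climb
without visiting `A`. -/
def EscapesUpward (A : Set (Pt d)) : Prop :=
  ∀ z : Pt d, ∃ i : Fin d, z + Pi.single i 1 ∉ A

/-- The linear functional on `ℤ^d` which upward unit steps increase by one. -/
def height (x : Pt d) : ℤ := ∑ i, x i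

section Reachability

variable {A W : Set (Pt d)} {x y : Pt d}

theorem EscapesUpward.mono (hAW : A ⊆ W) (hW : EscapesUpward W) : EscapesUpward A :=
  fun z => (hW z).imp fun _ => mt (@hAW _)

theorem height_add_single (x : Pt d) (i : Fin d) (c : ℤ) :
    height (x + Pi.single i c) = height x + c := by
  simp [height, Finset.sum_add_distrib]

theorem ReachableOutside.notMem (h : ReachableOutside W x y) (hx : x ∉ W) : y ∉ W := by
  cases h with
  | refl => exact hx
  | tail _ hstep => exact hstep.1

theorem ReachableOutside.symm (h : ReachableOutside W x y) (hx : x ∉ W) :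
    ReachableOutside W y x := by
  induction h with
  | refl => exact .refl
  | tail hreach hstep ih =>
    exact .head ⟨ReachableOutside.notMem hreach hx, by simpa using neg_mem_Dir hstep.2⟩ ih

theorem EscapesUpward.exists_reachableOutside_le_height (hW : EscapesUpward W) (x : Pt d) (M : ℤ) :
    ∃ y, ReachableOutside W x y ∧ M ≤ height y := by
  have hclimb (k : ℕ) : ∃ y, ReachableOutside W x y ∧ height x + k ≤ height y := by
    induction k with
    | zero => exact ⟨x, .refl, by simp⟩
    | succ k ih =>
      obtain ⟨y, hxy, hy⟩ := ih
      obtain ⟨i, hi⟩ := hW y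
      refine ⟨_, hxy.tail ⟨hi, i, Or.inl (add_sub_cancel_left _ _)⟩, ?_⟩
      rw [height_add_single]
      push_cast
      linarith
  obtain ⟨y, hxy, hy⟩ := hclimb (M - height x).toNat
  exact ⟨y, hxy, by omega⟩

theorem reachableOutside_of_le (hW : ∀ z ∈ W, height z < height x) (hxy : x ≤ y) :
    ReachableOutside W x y := by
  have hcover := le_iff_reflTransGen_covBy.mp hxy
  clear hxy
  induction hcover with
  | refl => exact .refl
  | @tail z w hxz hzw ih =>
    have hxw : height x ≤ height w :=
      Finset.sum_le_sum fun i _ => (le_iff_reflTransGen_covBy.mpr hxz).trans hzw.le i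
    obtain ⟨i, u, hu, rfl⟩ := Pi.covBy_iff_exists_right_eq.mp hzw
    obtain rfl := Order.covBy_iff_add_one_eq.mp hu
    have hstep : Function.update z i (z i + 1) - z = Pi.single i 1 := by
      ext j
      rcases eq_or_ne j i with rfl | hj <;> simp [*]
    exact ih.tail ⟨fun hmem => (hW _ hmem).not_ge hxw, i, Or.inl hstep⟩

theorem EscapesUpward.reachableOutside (hW : EscapesUpward W) (hfin : W.Finite) (x : Pt d)
    (hy : y ∉ W) : ReachableOutside W x y := by
  obtain ⟨M, hM⟩ := (hfin.image height).bddAbove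
  have hlow {z : Pt d} (hz : M + 1 ≤ height z) : ∀ w ∈ W, height w < height z := fun w hw => by
    linarith [hM (Set.mem_image_of_mem height hw)]
  obtain ⟨x', hxx', hx'⟩ := hW.exists_reachableOutside_le_height x (M + 1)
  obtain ⟨y', hyy', hy'⟩ := hW.exists_reachableOutside_le_height y (M + 1)
  have hx'top := reachableOutside_of_le (hlow hx') (le_sup_left : x' ≤ x' ⊔ y')
  have hy'top := reachableOutside_of_le (hlow hy') (le_sup_right : y' ≤ x' ⊔ y')
  have hytop : ReachableOutside W y (x' ⊔ y') := hyy'.trans hy'top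
  exact (hxx'.trans hx'top).trans (hytop.symm hy)

theorem ReachableOutside.exists_path (h : ReachableOutside W x y) :
    ∃ (T : ℕ) (s : Fin T → Pt d), (∀ i, s i ∈ Dir d) ∧ wpos d x s T = y ∧
      ∀ u, 1 ≤ u → u ≤ T → wpos d x s u ∉ W := by
  induction h with
  | refl => exact ⟨0, Fin.elim0, fun i => i.elim0, wpos_zero x _, by omega⟩
  | @tail z w _ hzw ih =>
    obtain ⟨T, s, hs, hz, havoid⟩ := ih
    have hw : wpos d x (Fin.snoc s (w - z) : Fin (T + 1) → Pt d) (T + 1) = w := by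
      rw [wpos_succ_last, ← wpos_init x _ le_rfl, Fin.init_snoc, Fin.snoc_last, hz, add_sub_cancel]
    refine ⟨T + 1, Fin.snoc s (w - z), Fin.forall_fin_succ'.mpr ⟨fun i => ?_, ?_⟩, hw,
      fun u hu huT => ?_⟩
    · simpa using hs i
    · simpa using hzw.2
    · rcases huT.eq_or_lt with rfl | huT
      · rw [hw]; exact hzw.1
      · rw [← wpos_init x _ (Nat.lt_succ_iff.mp huT), Fin.init_snoc]
        exact havoid u hu (by omega)

theorem ReachableOutside.escapeProb_pos [NeZero d] (h : ReachableOutside A x y)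
    (hy : 0 < escapeProb A y) : 0 < escapeProb A x := by
  induction h using Relation.ReflTransGen.head_induction_on with
  | refl => exact hy
  | @head z w hzw _ ih =>
    obtain ⟨p, hp⟩ : ∃ p, unitStep p = w - z := by
      rw [← Set.mem_range, range_unitStep]
      exact hzw.2
    have hzp : z + unitStep p = w := by rw [hp, add_sub_cancel]
    refine (Finset.expect_pos' (fun q _ => ?_) ⟨p, Finset.mem_univ _, ?_⟩).trans_le
      (expect_indicator_escapeProb_le A z)
    · exact Set.indicator_nonneg (fun v _ => escapeProb_nonneg A v) _
    · rwa [hzp, Set.indicator_of_mem (Set.mem_compl hzw.1)]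

end Reachability

/-! ### Transience -/

section Transience

/-- A positive function on `ℤ^d` vanishing at infinity and, for `3 ≤ d`, superharmonic: a
comparison function witnessing transience. The shift by `15` keeps the fourth-order terms of its
Taylor expansion below the second-order ones. -/
noncomputable def potential (x : Pt d) : ℝ := (√((x ⬝ᵥ x : ℤ) + 15))⁻¹

theorem potential_pos (x : Pt d) : 0 < potential x := by
  have : (0 : ℝ) ≤ (x ⬝ᵥ x : ℤ) := by exact_mod_cast dotProduct_self_nonneg x
  unfold potential
  positivity

theorem dotProduct_self_add_unitStep (x : Pt d) (p : Fin d × ℤˣ) :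
    (x + unitStep p) ⬝ᵥ (x + unitStep p) = x ⬝ᵥ x + 2 * (p.2 * x p.1) + 1 := by
  have hsq : (p.2 : ℤ) * p.2 = 1 := Int.units_coe_mul_self p.2
  simp only [unitStep, dotProduct_add, add_dotProduct, dotProduct_single, single_dotProduct,
    Pi.add_apply, Pi.single_eq_same]
  linear_combination hsq

theorem sum_potential_add_unitStep_le (x : Pt d) (i : Fin d) {r : ℝ}
    (hr : r = (x ⬝ᵥ x : ℤ) + 16) :
    ∑ ε : ℤˣ, potential (x + unitStep (i, ε)) ≤
      (2 + (3 / r ^ 2 + 32 / r ^ 3) * (x i : ℝ) ^ 2) * (√r)⁻¹ := by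
  have hsq : (x i : ℝ) ^ 2 ≤ (x ⬝ᵥ x : ℤ) := by
    have := Finset.single_le_sum (fun j _ => mul_self_nonneg (x j)) (Finset.mem_univ i)
    exact_mod_cast (sq (x i)).trans_le this
  convert inv_sqrt_add_add_inv_sqrt_sub_le (r := r) (by linarith [sq_nonneg (x i : ℝ)])
    (by linarith) using 1
  rw [UnitsInt.univ, Finset.sum_pair (by decide)]
  simp only [potential, dotProduct_self_add_unitStep, hr]
  push_cast
  congr 3 <;> ring

theorem expect_potential_le (hd : 3 ≤ d) (x : Pt d) :
    𝔼 p, potential (x + unitStep p) ≤ potential x := by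
  have : NeZero d := ⟨by omega⟩
  have hd' : (3 : ℝ) ≤ d := by exact_mod_cast hd
  set r : ℝ := (x ⬝ᵥ x : ℤ) + 16 with hr_def
  have hr : 16 ≤ r := le_add_of_nonneg_left (by exact_mod_cast dotProduct_self_nonneg x)
  have hsum : ∑ i, (x i : ℝ) ^ 2 = r - 16 := by
    simp [hr_def, dotProduct, sq]
  have hcorrection : (3 / r ^ 2 + 32 / r ^ 3) * (r - 16) ≤ d / r := by
    have : 3 / r - (3 / r ^ 2 + 32 / r ^ 3) * (r - 16) = 16 / r ^ 2 + 512 / r ^ 3 := by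
      field_simp; ring
    have : 0 ≤ 16 / r ^ 2 + 512 / r ^ 3 := by positivity
    have : 3 / r ≤ d / r := by gcongr
    linarith
  have hcard : (Fintype.card (Fin d × ℤˣ) : ℝ) = 2 * d := by simp [mul_comm]
  rw [Fintype.expect_eq_sum_div_card, Fintype.sum_prod_type, hcard, div_le_iff₀ (by positivity)]
  calc
    _ ≤ ∑ i, (2 + (3 / r ^ 2 + 32 / r ^ 3) * (x i : ℝ) ^ 2) * (√r)⁻¹ :=
      Finset.sum_le_sum fun i _ => sum_potential_add_unitStep_le x i hr_def
    _ = (2 * d + (3 / r ^ 2 + 32 / r ^ 3) * (r - 16)) * (√r)⁻¹ := by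
      rw [← Finset.sum_mul, Finset.sum_add_distrib, ← Finset.mul_sum, hsum]
      simp [mul_comm]
    _ ≤ (2 * d + d / r) * (√r)⁻¹ := by gcongr
    _ = (1 + 1 / (2 * r)) * (√r)⁻¹ * (2 * d) := by field_simp
    _ ≤ (√(r - 1))⁻¹ * (2 * d) := by
      gcongr
      exact one_add_mul_inv_sqrt_le (by linarith)
    _ = potential x * (2 * d) := by
      rw [potential, hr_def, add_sub_assoc]
      norm_num

theorem height_le_dotProduct_self (x : Pt d) : height x ≤ x ⬝ᵥ x :=
  Finset.sum_le_sum fun i _ => by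
    simpa only [sq] using Int.le_self_sq (x i)

theorem exists_one_le_mul_potential {A : Set (Pt d)} (hA : A.Finite) :
    ∃ c : ℝ, 0 ≤ c ∧ ∀ z ∈ A, 1 ≤ c * potential z := by
  obtain ⟨c, hc⟩ := (hA.image fun z => (potential z)⁻¹).bddAbove
  refine ⟨max c 0, le_max_right c 0, fun z hz => ?_⟩
  rw [← inv_le_iff_one_le_mul₀ (potential_pos z)]
  exact (hc ⟨z, hz, rfl⟩).trans (le_max_left c 0)

theorem EscapesUpward.escapeProb_pos {A : Set (Pt d)} (hup : EscapesUpward A) (hd : 3 ≤ d)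
    (hA : A.Finite) (x : Pt d) : 0 < escapeProb A x := by
  have : NeZero d := ⟨by omega⟩
  obtain ⟨c, hc0, hc⟩ := exists_one_le_mul_potential hA
  obtain ⟨y, hxy, hy⟩ := hup.exists_reachableOutside_le_height x ⌈c ^ 2⌉
  have hfar : c * potential y < 1 := by
    have hsq : c ^ 2 ≤ (y ⬝ᵥ y : ℤ) := Int.ceil_le.mp (hy.trans (height_le_dotProduct_self y))
    rw [← lt_mul_inv_iff₀ (potential_pos y), one_mul, potential, inv_inv, Real.lt_sqrt hc0]
    linarith
  refine hxy.escapeProb_pos (escapeProb_pos_of_superharmonic (fun z => ?_) (fun z => ?_) hc hfar)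
  · exact mul_nonneg hc0 (potential_pos z).le
  · rw [← Finset.mul_expect]
    gcongr
    exact expect_potential_le hd z

end Transience

/-! ### Positivity of the transition probabilities -/

section Positivity

variable {A W : Set (Pt d)} {U : Conf d} {x y : Pt d}

theorem esc_nonneg (A : Set (Pt d)) (x : Pt d) : 0 ≤ esc d A x := by
  unfold esc
  split_ifs
  exacts [escapeProb_nonneg A x, le_rfl]

theorem mem_of_esc_pos (h : 0 < esc d A x) : x ∈ A :=
  by_contra fun hx => h.ne' (if_neg hx)

theorem esc_pos_iff (hd : 3 ≤ d) (hA : A.Finite) (hup : EscapesUpward A) :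
    0 < esc d A x ↔ x ∈ A := by
  refine ⟨mem_of_esc_pos, fun hx => ?_⟩
  rw [esc, if_pos hx]
  exact hup.escapeProb_pos hd hA x

theorem capa_eq_sum (U : Conf d) : capa d U = ∑ x ∈ U, esc d U x :=
  Finset.tsum_subtype' U (esc d U)

theorem capa_nonneg (U : Conf d) : 0 ≤ capa d U :=
  capa_eq_sum U ▸ Finset.sum_nonneg fun x _ => esc_nonneg _ x

theorem capa_pos (h : 0 < esc d U x) : 0 < capa d U :=
  capa_eq_sum U ▸ Finset.sum_pos' (fun z _ => esc_nonneg _ z) ⟨x, mem_of_esc_pos h, h⟩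

theorem harm_pos_iff (hd : 3 ≤ d) (hup : EscapesUpward (U : Set (Pt d))) :
    0 < harm d U x ↔ x ∈ U := by
  rw [harm, div_pos_iff_numerator_pos (esc_nonneg _ x) capa_pos,
    esc_pos_iff hd U.finite_toSet hup, Finset.mem_coe]

theorem capS_pos {E : ClusteringS d} {i : Fin E.1} (hesc : 0 < esc d (E.2 i) x) :
    0 < capS d E :=
  Finset.sum_pos' (fun j _ => capa_nonneg (E.2 j)) ⟨i, Finset.mem_univ i, capa_pos hesc⟩

theorem harmS_pos_iff (hd : 3 ≤ d) {E : ClusteringS d} {i : Fin E.1}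
    (hup : EscapesUpward (E.2 i : Set (Pt d))) : 0 < harmS d E i x ↔ x ∈ E.2 i := by
  rw [harmS, div_pos_iff_numerator_pos (esc_nonneg _ x) capS_pos,
    esc_pos_iff hd (E.2 i).finite_toSet hup, Finset.mem_coe]

theorem harm_nonneg (U : Conf d) (x : Pt d) : 0 ≤ harm d U x :=
  div_nonneg (esc_nonneg _ x) (capa_nonneg U)

theorem harmS_nonneg (E : ClusteringS d) (i : Fin E.1) (x : Pt d) : 0 ≤ harmS d E i x :=
  div_nonneg (esc_nonneg _ x) (Finset.sum_nonneg fun j _ => capa_nonneg (E.2 j))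

theorem firstHitFromProb_nonneg (W : Set (Pt d)) (x y : Pt d) (t : ℕ) :
    0 ≤ firstHitFromProb W x y t :=
  prob_nonneg _ _

theorem firstHitFromProb_le_firstHitProb (W : Set (Pt d)) (x y : Pt d) (t : ℕ) :
    firstHitFromProb W x y t ≤ firstHitProb W x t :=
  prob_mono fun _ h => ⟨h.1, h.2.1, h.2.2.2⟩

theorem summable_firstHitFromProb [NeZero d] (W : Set (Pt d)) (x y : Pt d) :
    Summable (firstHitFromProb W x y) :=
  .of_nonneg_of_le (firstHitFromProb_nonneg W x y) (firstHitFromProb_le_firstHitProb W x y)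
    (summable_firstHitProb W x)

theorem hitFrom_nonneg (W : Set (Pt d)) (x y : Pt d) : 0 ≤ hitFrom d W x y :=
  tsum_nonneg (firstHitFromProb_nonneg W x y)

theorem transP_nonneg (W : Set (Pt d)) (x y : Pt d) : 0 ≤ transP d W x y :=
  div_nonneg (hitFrom_nonneg W x y) (tsum_nonneg (firstHitProb_nonneg W x))

theorem hitFrom_le_retProb [NeZero d] (W : Set (Pt d)) (x y : Pt d) :
    hitFrom d W x y ≤ retProb d W x :=
  (summable_firstHitFromProb W x y).tsum_le_tsum (firstHitFromProb_le_firstHitProb W x y)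
    (summable_firstHitProb W x)

theorem hitFrom_pos_iff [NeZero d] : 0 < hitFrom d W x y ↔
    ∃ (T : ℕ) (s : Fin (T + 1) → Pt d), (∀ i, s i ∈ Dir d) ∧ wpos d x s (T + 1) ∈ W ∧
      wpos d x s T = y ∧ ∀ u, 1 ≤ u → u ≤ T → wpos d x s u ∉ W := by
  constructor
  · intro h
    obtain ⟨t, ht⟩ := not_forall.mp fun hzero => h.ne' ((tsum_congr hzero).trans tsum_zero)
    obtain ⟨s, hs, ht, hhit, hlast, havoid⟩ :=
      prob_pos_iff.mp ((firstHitFromProb_nonneg W x y t).lt_of_ne' ht)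
    obtain ⟨T, rfl⟩ : ∃ T, t = T + 1 := ⟨t - 1, by omega⟩
    exact ⟨T, s, hs, hhit, hlast, fun u hu huT => havoid u hu (by omega)⟩
  · rintro ⟨T, s, hs, hhit, hlast, havoid⟩
    exact (summable_firstHitFromProb W x y).tsum_pos (firstHitFromProb_nonneg W x y) (T + 1)
      (prob_pos_iff.mpr ⟨s, hs, by omega, hhit, hlast, fun u hu huT => havoid u hu (by omega)⟩)

theorem transP_pos_iff [NeZero d] (hW : W.Finite) (hup : EscapesUpward W) (hx : x ∉ W) :
    0 < transP d W x y ↔ y ∈ bdry d W := by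
  rw [transP, div_pos_iff_numerator_pos (hitFrom_nonneg W x y)
    fun h => h.trans_le (hitFrom_le_retProb W x y), hitFrom_pos_iff]
  constructor
  · rintro ⟨T, s, hs, hhit, rfl, havoid⟩
    refine ⟨?_, _, hhit, latAdj_iff_sub_mem_Dir.mpr ?_⟩
    · rcases T.eq_zero_or_pos with rfl | hT
      · rwa [wpos_zero]
      · exact havoid T hT le_rfl
    · rw [wpos_succ_last, add_sub_cancel_left]
      exact hs _
  · rintro ⟨hy, w, hw, hyw⟩
    obtain ⟨T, s, hs, hend, havoid⟩ := (hup.reachableOutside hW x hy).exists_path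
    have hinit {u : ℕ} (hu : u ≤ T) :
        wpos d x (Fin.snoc s (w - y) : Fin (T + 1) → Pt d) u = wpos d x s u := by
      rw [← wpos_init x _ hu, Fin.init_snoc]
    refine ⟨T, Fin.snoc s (w - y), Fin.forall_fin_succ'.mpr ⟨fun i => ?_, ?_⟩, ?_, ?_, ?_⟩
    · simpa using hs i
    · simpa using latAdj_iff_sub_mem_Dir.mp hyw
    · rwa [wpos_succ_last, hinit le_rfl, hend, Fin.snoc_last, add_sub_cancel]
    · rw [hinit le_rfl, hend]
    · exact fun u hu huT => hinit huT ▸ havoid u hu huT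

theorem pHAT_pos_iff (hd : 3 ≤ d) (hup : EscapesUpward (U : Set (Pt d))) :
    0 < pHAT d U x y ↔ x ∈ U ∧ y ∈ bdry d ((U : Set (Pt d)) \ {x}) := by
  have : NeZero d := ⟨by omega⟩
  rw [pHAT, mul_pos_iff_of_nonneg (harm_nonneg U x) (transP_nonneg _ x y), harm_pos_iff hd hup,
    transP_pos_iff (U.finite_toSet.subset Set.sdiff_subset) (hup.mono Set.sdiff_subset) (by simp)]

theorem qIHAT_pos_iff (hd : 3 ≤ d) {E : ClusteringS d} {i : Fin E.1}
    (hup : EscapesUpward (E.2 i : Set (Pt d))) :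
    0 < qIHAT d E i x y ↔ x ∈ E.2 i ∧ y ∈ bdry d ((E.2 i : Set (Pt d)) \ {x}) := by
  have : NeZero d := ⟨by omega⟩
  rw [qIHAT, mul_pos_iff_of_nonneg (harmS_nonneg E i x) (transP_nonneg _ x y),
    harmS_pos_iff hd hup, transP_pos_iff ((E.2 i).finite_toSet.subset Set.sdiff_subset)
      (hup.mono Set.sdiff_subset) (by simp)]

end Positivity

/-! ### Separated clusterings -/

section Clusterings

variable {x y : Pt d}

theorem dist0_self (x : Pt d) : dist0 d x x = 0 := by
  simp [dist0]

theorem dist0_eq_one_of_latAdj (h : latAdj d x y) : dist0 d x y = 1 := by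
  obtain ⟨i, hi | hi⟩ := latAdj_iff_sub_mem_Dir.mp h <;> rw [sub_eq_iff_eq_add'] at hi <;>
    subst hi <;> simp [dist0, Pi.single_apply, apply_ite]

theorem dist0_add_single_le (x : Pt d) (i j : Fin d) :
    dist0 d (x + Pi.single i 1) (x + Pi.single j 1) ≤ √2 := by
  refine Real.sqrt_le_sqrt ?_
  calc
    _ ≤ ∑ k, ((if k = i then 1 else 0) + (if k = j then 1 else 0) : ℝ) := by
      gcongr with k
      simp only [Pi.add_apply, Pi.single_apply]
      split_ifs <;> simp
    _ = 2 := by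
      rw [Finset.sum_add_distrib]
      norm_num

theorem sep_le_dist0 {k : ℕ} {C : Fin k → Conf d} {i j : Fin k} (hij : j ≠ i) (hx : x ∈ C i)
    (hy : y ∈ C j) : sep d C ≤ dist0 d x y := by
  have hy' : y ∈ others d C i :=
    Finset.mem_biUnion.mpr ⟨j, Finset.mem_univ j, by rwa [if_neg hij]⟩
  have hbdd : BddBelow {r | ∃ x ∈ C i, ∃ y ∈ others d C i, r = dist0 d x y} :=
    ⟨0, by rintro r ⟨x, -, y, -, rfl⟩; exact Real.sqrt_nonneg _⟩
  exact (ciInf_le (Set.finite_range _).bddBelow i).trans (csInf_le hbdd ⟨x, hx, y, hy', rfl⟩)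

theorem eq_of_mem_of_dist0_lt_sep {k : ℕ} {C : Fin k → Conf d} {i j : Fin k} (hx : x ∈ C i)
    (hy : y ∈ C j) (hxy : dist0 d x y < sep d C) : j = i :=
  by_contra fun hij => (sep_le_dist0 hij hx hy).not_gt hxy

theorem mem_confOf {E : ClusteringS d} : x ∈ confOf d E ↔ ∃ i, x ∈ E.2 i := by
  simp [confOf]

theorem subset_confOf (E : ClusteringS d) (i : Fin E.1) : E.2 i ⊆ confOf d E :=
  fun _ hx => mem_confOf.mpr ⟨i, hx⟩

theorem escapesUpward_confOf [NeZero d] {E : ClusteringS d} (hcard : ∀ i, (E.2 i).card < d)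
    (hsep : √2 < sep d E.2) : EscapesUpward (confOf d E : Set (Pt d)) := by
  intro z
  by_contra! hz
  choose c hc using fun i => mem_confOf.mp (hz i)
  have hconst (i : Fin d) : c i = c 0 :=
    eq_of_mem_of_dist0_lt_sep (hc 0) (hc i) ((dist0_add_single_le z 0 i).trans_lt hsep)
  have hinj : Function.Injective fun i : Fin d => z + Pi.single i (1 : ℤ) := fun i j hij =>
    congrArg Prod.fst (unitStep_injective (a₁ := (i, 1)) (a₂ := (j, 1)) (add_left_cancel hij))
  have hle := Finset.card_le_card_of_injOn (s := Finset.univ) (t := E.2 (c 0)) _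
    (fun i _ => hconst i ▸ hc i) hinj.injOn
  rw [Finset.card_univ, Fintype.card_fin] at hle
  exact hle.not_gt (hcard (c 0))

theorem mem_bdry_confOf_iff {E : ClusteringS d} {i : Fin E.1}
    (hsep : 1 < sep d (updC d E i x y).2) :
    y ∈ bdry d ((confOf d E : Set (Pt d)) \ {x}) ↔ y ∈ bdry d ((E.2 i : Set (Pt d)) \ {x}) := by
  have hy : y ∈ (updC d E i x y).2 i := by simp [updC]
  have hnear {w : Pt d} (hyw : dist0 d y w ≤ 1) (hw : w ∈ (confOf d E : Set (Pt d)) \ {x}) :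
      w ∈ (E.2 i : Set (Pt d)) \ {x} := by
    obtain ⟨j, hj⟩ := mem_confOf.mp hw.1
    suffices j = i from ⟨this ▸ hj, hw.2⟩
    by_contra hij
    have hj' : w ∈ (updC d E i x y).2 j := by simpa [updC, hij] using hj
    exact hij (eq_of_mem_of_dist0_lt_sep hy hj' (hyw.trans_lt hsep))
  have hsub : (E.2 i : Set (Pt d)) \ {x} ⊆ (confOf d E : Set (Pt d)) \ {x} :=
    Set.sdiff_subset_sdiff_left (subset_confOf E i)
  constructor
  · rintro ⟨hyE, w, hw, hyw⟩
    exact ⟨mt (@hsub y) hyE, w, hnear (dist0_eq_one_of_latAdj hyw).le hw, hyw⟩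
  · rintro ⟨hyE, w, hw, hyw⟩
    exact ⟨mt (hnear (by simp [dist0_self])) hyE, w, hsub hw, hyw⟩

theorem pHAT_pos_iff_qIHAT_pos (hd : 3 ≤ d) {E : ClusteringS d} {i : Fin E.1}
    (hcard : ∀ j, (E.2 j).card < d) (hE : √2 < sep d E.2) (hx : x ∈ E.2 i)
    (hupd : 1 < sep d (updC d E i x y).2) :
    0 < pHAT d (confOf d E) x y ↔ 0 < qIHAT d E i x y := by
  have : NeZero d := ⟨by omega⟩
  have hup := escapesUpward_confOf hcard hE
  rw [pHAT_pos_iff hd hup, qIHAT_pos_iff hd (hup.mono (subset_confOf E i)),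
    mem_bdry_confOf_iff hupd]
  exact and_congr_left' (iff_of_true (subset_confOf E i hx) hx)

end Clusterings

theorem pairs_triples_general (hd : 3 ≤ d) (E0 E1 : ClusteringS d)
    (hcard : ∀ i, (E0.2 i).card < d) (hE0 : √2 < sep d E0.2) (hE1 : 1 < sep d E1.2) :
    Pairs d E0 E1 =
      {p : Pt d × Pt d | ∃ i : Fin E0.1, p.1 ∈ E0.2 i ∧
        (⟨i, p.1, p.2⟩ : Fin E0.1 × Pt d × Pt d) ∈ Triples d E0 E1} ∧
    Triples d E0 E1 =
      {q : Fin E0.1 × Pt d × Pt d | q.2.1 ∈ E0.2 q.1 ∧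
        (q.2.1, q.2.2) ∈ Pairs d E0 E1} := by
  have : NeZero d := ⟨by omega⟩
  have hpos {i : Fin E0.1} {x y : Pt d} (hx : x ∈ E0.2 i) (h : E1 = updC d E0 i x y) :
      0 < pHAT d (confOf d E0) x y ↔ 0 < qIHAT d E0 i x y :=
    pHAT_pos_iff_qIHAT_pos hd hcard hE0 hx (h ▸ hE1)
  have hmem {i : Fin E0.1} {x y : Pt d} (h : 0 < qIHAT d E0 i x y) : x ∈ E0.2 i :=
    ((qIHAT_pos_iff hd ((escapesUpward_confOf hcard hE0).mono (subset_confOf E0 i))).mp h).1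
  have hunique {i j : Fin E0.1} {x : Pt d} (hi : x ∈ E0.2 i) (hj : x ∈ E0.2 j) : j = i :=
    eq_of_mem_of_dist0_lt_sep hi hj (by rw [dist0_self]; exact (Real.sqrt_nonneg 2).trans_lt hE0)
  constructor
  · ext ⟨x, y⟩
    constructor
    · rintro ⟨hp, i, hx, h⟩
      exact ⟨i, hx, (hpos hx h).mp hp, h⟩
    · rintro ⟨i, hx, hq, h⟩
      exact ⟨(hpos hx h).mpr hq, i, hx, h⟩
  · ext ⟨i, x, y⟩
    constructor
    · rintro ⟨hq, h⟩
      exact ⟨hmem hq, (hpos (hmem hq) h).mpr hq, i, hmem hq, h⟩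
    · rintro ⟨hx, hp, j, hj, h⟩
      obtain rfl := hunique hx hj
      exact ⟨(hpos hx h).mp hp, h⟩

/-- **Correspondence between `Pairs` and `Triples`.** For `(a,b)` separated DOT clusterings
`E0, E1` of `n`-element configurations in `ℤ^d`, `d ≥ 5`, `n ≥ 4`, if
`a ≥ e^{max{100b, 10d²}}` then `Pairs(E0,E1)` and `Triples(E0,E1)` correspond via
`(x,y) ↔ (clust(E0,x), x, y)`. -/
theorem pairs_triples (d n : ℕ) (hd : 5 ≤ d) (hn : 4 ≤ n) (a b : ℝ)
    (ha1 : 1 < a) (hb : 1 < b)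
    (ha : Real.exp (max (100 * b) (10 * (d : ℝ) ^ 2)) ≤ a)
    (E0 E1 : ClusteringS d)
    (hE0 : IsClusteringConf d n E0) (hE0dot : IsDOT d E0.2 a b)
    (hE1 : IsClusteringConf d n E1) (hE1dot : IsDOT d E1.2 a b) :
    Pairs d E0 E1 =
      {p : Pt d × Pt d | ∃ i : Fin E0.1, p.1 ∈ E0.2 i ∧
        (⟨i, p.1, p.2⟩ : Fin E0.1 × Pt d × Pt d) ∈ Triples d E0 E1} ∧
    Triples d E0 E1 =
      {q : Fin E0.1 × Pt d × Pt d | q.2.1 ∈ E0.2 q.1 ∧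
        (q.2.1, q.2.2) ∈ Pairs d E0 E1} := by
  have hsqrt : √2 < a := by
    have hd' : (5 : ℝ) ≤ d := by exact_mod_cast hd
    calc
      √2 < 2 := by rw [Real.sqrt_lt' two_pos]; norm_num
      _ ≤ 10 * (d : ℝ) ^ 2 + 1 := by nlinarith
      _ ≤ Real.exp (10 * (d : ℝ) ^ 2) := Real.add_one_le_exp _
      _ ≤ a := (Real.exp_le_exp.mpr (le_max_right _ _)).trans ha
  exact pairs_triples_general (by omega) E0 E1 (fun i => by have := hE0dot.1 i; omega)
    (hsqrt.trans_le hE0dot.2.1) (ha1.trans_le hE1dot.2.1)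

end HATFormal
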